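/- Let n ≥ 2, L ≥ 1, and let K_{i,j}^{(ℓ)} ∈ {0,1} be given for all 1 ≤ i ≤ j ≤ n−1 and ℓ ∈ {1, …, L}. Define the strictly upper-triangular matrix B ∈ {0,1}^{n×n} by B_{i,j+1} = ⊕_{ℓ=1}^{L} K_{i,j}^{(ℓ)} for 1 ≤ i ≤ j ≤ n−1 and all other entries 0. Define the layered directed graph C with consecutive layers N_1, J_1, N_2, J_2, …, J_{n−1}, N_n, where each layer N_i has vertex set {1, …, n} and each layer J_i has vertex set {1, …, n} ∪ {(i,j,ℓ) : i ≤ j ≤ n−1, ℓ ∈ {1,…,L}}, and whose only edges are: (a) from vertex q in N_i to vertex q in J_i, for every q ∈ {1,…,n} and every i; (b) from vertex i in N_i to vertex (i,j,ℓ) in J_i if and only if K_{i,j}^{(ℓ)} = 1; (c) from vertex q in J_i to vertex q in N_{i+1}, for every q ∈ {1,…,n} and every i; and (d) from vertex (i,j,ℓ) in J_i to vertex j+1 in N_{i+1}, always. Then the number of directed paths in C from vertex 1 in layer N_1 to vertex n in layer N_n is congruent modulo 2 to the number of directed paths from vertex 1 to vertex n in the monotone DAG B. -/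

import Mathlib

/-!
Proposition 4.12 ('prop:C') of the paper.  All indices are 0-based: vertex `p : Fin n`
corresponds to the paper's vertex `p+1`, the bit `K i j ℓ` (for `0 ≤ i ≤ j ≤ n-2`,
`ℓ < L`) corresponds to the paper's `K_{i+1,j+1}^{(ℓ+1)}`, and the paper's matrix entry
`B_{i,j+1} = ⊕_ℓ K_{i,j}^{(ℓ)}` becomes `B p q = (∑_ℓ K p (q-1) ℓ) % 2` for `p < q`.

The layered graph `C` has `2n-1` layers `N_1, J_1, N_2, …, J_{n-1}, N_n`, indexed by
`t : Fin (2n-1)` (even `t = 2i` is layer `N_{i+1}`, odd `t = 2i+1` is layer `J_{i+1}`).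
Layer-`t` vertices are encoded as `(t, Sum.inl q)` for the vertices `{1, …, n}` and
`(t, Sum.inr (j, ℓ))` for the junction vertices `(i, j, ℓ)` of a `J`-layer (junction
vertices of a `J_i` layer all have first coordinate `i`, so only `(j, ℓ)` is recorded;
unused sum components are isolated, hence do not affect path counts).  Edges (a)–(d)
go only from each layer to the next, so the number of directed paths between two
vertices is `∑_{k≥1} (M^k)` of the adjacency matrix `M`; all such paths have length at
most `2n-2`.
-/

/-- The monotone-DAG adjacency matrix `B` determined by the bits `K`. -/
def monB (n L : ℕ) (K : ℕ → ℕ → ℕ → Bool) : Matrix (Fin n) (Fin n) ℕ :=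
  Matrix.of fun p q : Fin n =>
    if p < q then
      (∑ ℓ ∈ Finset.range L, if K (p : ℕ) ((q : ℕ) - 1) ℓ then 1 else 0) % 2
    else 0

/-- Adjacency matrix of the layered graph `C`: edges (a) `q ∈ N_i → q ∈ J_i` always,
(b) `i ∈ N_i → (i,j,ℓ) ∈ J_i` iff `K i j ℓ = 1` (with `i ≤ j ≤ n-2`, 0-indexed),
(c) `q ∈ J_i → q ∈ N_{i+1}` always, (d) `(i,j,ℓ) ∈ J_i → j+1 ∈ N_{i+1}` always. -/
def layerAdj (n L : ℕ) (K : ℕ → ℕ → ℕ → Bool) :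
    Matrix (Fin (2 * n - 1) × (Fin n ⊕ Fin n × Fin L))
      (Fin (2 * n - 1) × (Fin n ⊕ Fin n × Fin L)) ℕ :=
  Matrix.of fun p q =>
    if (q.1 : ℕ) = (p.1 : ℕ) + 1 then
      if (p.1 : ℕ) % 2 = 0 then
        -- `N`-layer (layer index `(p.1 : ℕ)/2`) to `J`-layer
        match p.2, q.2 with
        | Sum.inl a, Sum.inl b => if a = b then 1 else 0
        | Sum.inl a, Sum.inr (j, ℓ) =>
            if (a : ℕ) = (p.1 : ℕ) / 2 ∧ (a : ℕ) ≤ (j : ℕ) ∧ (j : ℕ) ≤ n - 2 ∧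
                K (a : ℕ) (j : ℕ) (ℓ : ℕ) then 1 else 0
        | _, _ => 0
      else
        -- `J`-layer to `N`-layer
        match p.2, q.2 with
        | Sum.inl a, Sum.inl b => if a = b then 1 else 0
        | Sum.inr (j, _), Sum.inl b => if (b : ℕ) = (j : ℕ) + 1 then 1 else 0
        | _, _ => 0
    else 0

/-!
Let `M` count the edges of `B` with multiplicity, `M_{i,j+1} = ∑_ℓ K_{i,j}^{(ℓ)}`, so that `B ≡ M`
modulo 2, and let `E_i M` be the matrix whose only nonzero row is row `i` of `M`. Crossing the
layers `N_i → J_i → N_{i+1}` acts on the vertices `{1, …, n}` as `1 + E_i M`: stay put, or leave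
`i` along an edge. Since `M` is strictly upper triangular, `(E_i M) (E_j M) = 0` for `j ≤ i`, so in
the powers of `∑ E_i M = M` only the words with increasing indices survive, whence
`(1 + E_1 M) ⋯ (1 + E_{n-1} M) = ∑_k M^k`.
So `C` has exactly as many paths as the multigraph `M`, and reducing modulo 2 gives `B`.
-/

section Semiring

variable {R : Type*} [Semiring R] {x : ℕ → R}

lemma sum_range_succ_pow_succ (h : ∀ i j, j ≤ i → x i * x j = 0) (m k : ℕ) :
    (∑ i ∈ Finset.range (m + 1), x i) ^ (k + 1) =
      (∑ i ∈ Finset.range m, x i) ^ k * ∑ i ∈ Finset.range (m + 1), x i := by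
  have last_mul_sum : x m * ∑ j ∈ Finset.range (m + 1), x j = 0 := by
    rw [Finset.mul_sum]
    exact Finset.sum_eq_zero fun j hj => h m j (Finset.mem_range_succ_iff.1 hj)
  induction k with
  | zero => simp
  | succ k ih =>
    rw [pow_succ, ih, mul_assoc, pow_succ, mul_assoc]
    nth_rw 1 [Finset.sum_range_succ]
    rw [add_mul, last_mul_sum, add_zero]

lemma sum_range_pow_succ_eq_zero (h : ∀ i j, j ≤ i → x i * x j = 0) (m : ℕ) :
    (∑ i ∈ Finset.range m, x i) ^ (m + 1) = 0 := by
  induction m with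
  | zero => simp
  | succ m ih => rw [sum_range_succ_pow_succ h, ih, zero_mul]

theorem prod_one_add_eq_sum_pow (h : ∀ i j, j ≤ i → x i * x j = 0) (m : ℕ) :
    ((List.range m).map fun i => 1 + x i).prod =
      ∑ k ∈ Finset.range (m + 1), (∑ i ∈ Finset.range m, x i) ^ k := by
  induction m with
  | zero => simp
  | succ m ih =>
    set s := ∑ i ∈ Finset.range m, x i with hs
    have geom : ∑ k ∈ Finset.range (m + 1), s ^ k = ∑ k ∈ Finset.range (m + 1), s ^ k * s + 1 := by
      simp only [← pow_succ]
      rw [← pow_zero s, ← Finset.sum_range_succ' (s ^ ·), Finset.sum_range_succ _ (m + 1),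
        sum_range_pow_succ_eq_zero h, add_zero]
    calc ((List.range (m + 1)).map fun i => 1 + x i).prod
      _ = ∑ k ∈ Finset.range (m + 1), s ^ k + ∑ k ∈ Finset.range (m + 1), s ^ k * x m := by
        rw [List.prod_range_succ, ih, mul_add, mul_one, Finset.sum_mul]
      _ = ∑ k ∈ Finset.range (m + 1), s ^ k * ∑ i ∈ Finset.range (m + 1), x i + 1 := by
        rw [geom, add_right_comm, ← Finset.sum_add_distrib]
        simp only [← mul_add, hs, ← Finset.sum_range_succ]
      _ = ∑ k ∈ Finset.range (m + 2), (∑ i ∈ Finset.range (m + 1), x i) ^ k := by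
        rw [Finset.sum_range_succ' _ (m + 1), pow_zero]
        simp only [sum_range_succ_pow_succ h, hs]

end Semiring

lemma pow_apply_modEq {ι : Type*} [Fintype ι] [DecidableEq ι] {c : ℕ} {A B : Matrix ι ι ℕ}
    (h : ∀ i j, A i j ≡ B i j [MOD c]) (k : ℕ) (i j : ι) :
    (A ^ k) i j ≡ (B ^ k) i j [MOD c] := by
  induction k generalizing j with
  | zero => simp only [pow_zero]; rfl
  | succ k ih =>
    simp only [pow_succ, Matrix.mul_apply]
    exact Nat.ModEq.sum fun r _ => (ih r).mul (h r j)

section RowPart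

variable {R : Type*} {n : ℕ}

/-- The matrix `E_i M` that agrees with `M` in row `i` and vanishes in all other rows. The row
number is a natural number, and `rowPart M i = 0` when `n ≤ i`. -/
def rowPart [Zero R] (M : Matrix (Fin n) (Fin n) R) (i : ℕ) : Matrix (Fin n) (Fin n) R :=
  Matrix.of fun a b => if (a : ℕ) = i then M a b else 0

lemma rowPart_mul_rowPart_eq_zero [NonUnitalNonAssocSemiring R] {M : Matrix (Fin n) (Fin n) R}
    (hM : ∀ a b, b ≤ a → M a b = 0) {i j : ℕ} (hji : j ≤ i) :
    rowPart M i * rowPart M j = 0 := by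
  ext a c
  rw [Matrix.mul_apply]
  refine Finset.sum_eq_zero fun b _ => ?_
  simp only [rowPart, Matrix.of_apply]
  split_ifs with ha hb
  · rw [hM a b (Fin.le_def.2 (by omega)), zero_mul]
  all_goals simp

lemma sum_rowPart_apply [AddCommMonoid R] (M : Matrix (Fin n) (Fin n) R) (m : ℕ) (a b : Fin n) :
    (∑ i ∈ Finset.range m, rowPart M i) a b = if (a : ℕ) < m then M a b else 0 := by
  simp [Matrix.sum_apply, rowPart]

/-- The last row of a strictly upper triangular matrix vanishes, so it contributes no factor. -/
theorem prod_one_add_rowPart [Semiring R] {M : Matrix (Fin n) (Fin n) R}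
    (hM : ∀ a b, b ≤ a → M a b = 0) :
    ((List.range (n - 1)).map fun i => 1 + rowPart M i).prod =
      ∑ k ∈ Finset.range (n - 1 + 1), M ^ k := by
  have sum_rows : ∑ i ∈ Finset.range (n - 1), rowPart M i = M := by
    ext a b
    rw [sum_rowPart_apply]
    split_ifs with ha
    · rfl
    · exact (hM a b (Fin.le_def.2 (by omega))).symm
  rw [prod_one_add_eq_sum_pow fun _ _ => rowPart_mul_rowPart_eq_zero hM, sum_rows]

end RowPart

section Layered

variable {R W : Type*} {N : ℕ}

/-- The block of a matrix on `N` layers with vertex set `W` that describes the passage from layer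
`s` to layer `t`. -/
def layerBlock (A : Matrix (Fin N × W) (Fin N × W) R) (s t : Fin N) : Matrix W W R :=
  A.submatrix (Prod.mk s) (Prod.mk t)

/-- A weighted adjacency matrix is layered if its edges only go from each layer to the next. -/
def IsLayered [Zero R] (A : Matrix (Fin N × W) (Fin N × W) R) : Prop :=
  ∀ p q, A p q ≠ 0 → (q.1 : ℕ) = p.1 + 1

variable [Semiring R] [Fintype W] [DecidableEq W] {A : Matrix (Fin N × W) (Fin N × W) R}

lemma IsLayered.eq_add_of_pow_apply_ne_zero (hA : IsLayered A) {k : ℕ} {p q : Fin N × W}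
    (h : (A ^ k) p q ≠ 0) : (q.1 : ℕ) = p.1 + k := by
  induction k generalizing q with
  | zero =>
    obtain rfl : p = q := by
      by_contra hpq
      exact h (by rw [pow_zero, Matrix.one_apply_ne hpq])
    rfl
  | succ k ih =>
    rw [pow_succ, Matrix.mul_apply] at h
    obtain ⟨r, -, hr⟩ := Finset.exists_ne_zero_of_sum_ne_zero h
    rw [hA r q (right_ne_zero_of_mul hr), ih (left_ne_zero_of_mul hr), add_assoc]

lemma IsLayered.layerBlock_pow_add (hA : IsLayered A) {j : ℕ} (k : ℕ) {s t : Fin N} (u : Fin N)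
    (ht : (t : ℕ) = s + j) :
    layerBlock (A ^ (j + k)) s u = layerBlock (A ^ j) s t * layerBlock (A ^ k) t u := by
  ext x y
  simp only [layerBlock, Matrix.submatrix_apply, Matrix.mul_apply, pow_add, Fintype.sum_prod_type]
  refine Fintype.sum_eq_single t fun r hr => Finset.sum_eq_zero fun w _ => ?_
  by_contra h
  exact hr (Fin.ext ((hA.eq_add_of_pow_apply_ne_zero (left_ne_zero_of_mul h)).trans ht.symm))

lemma IsLayered.sum_pow_apply (hA : IsLayered A) {p q : Fin N × W} {S : Finset ℕ} {d : ℕ}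
    (hd : d ∈ S) (hpq : (q.1 : ℕ) = p.1 + d) : ∑ k ∈ S, (A ^ k) p q = (A ^ d) p q := by
  refine Finset.sum_eq_single_of_mem d hd fun k _ hk => ?_
  by_contra h
  have := hA.eq_add_of_pow_apply_ne_zero h
  omega

end Layered

section LayerAdj

variable (n L : ℕ) (K : ℕ → ℕ → ℕ → Bool)

/-- The matrix `M` of edge multiplicities: `B` with each exclusive or of bits replaced by the sum
of the bits. -/
def edgeMultiplicity : Matrix (Fin n) (Fin n) ℕ :=
  Matrix.of fun p q => if p < q then (∑ ℓ ∈ Finset.range L, if K p (q - 1) ℓ then 1 else 0) else 0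

/-- The edges (b) of `C` that enter the junction vertices of the layer `J_{i+1}`. -/
def junctionIn (i : ℕ) : Matrix (Fin n) (Fin n × Fin L) ℕ :=
  Matrix.of fun a v =>
    if (a : ℕ) = i ∧ (a : ℕ) ≤ v.1 ∧ (v.1 : ℕ) ≤ n - 2 ∧ K a v.1 v.2 then 1 else 0

/-- The edges (d) of `C` that leave the junction vertices of a `J`-layer. -/
def junctionOut : Matrix (Fin n × Fin L) (Fin n) ℕ :=
  Matrix.of fun v b => if (b : ℕ) = v.1 + 1 then 1 else 0

lemma monB_modEq_edgeMultiplicity (p q : Fin n) :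
    monB n L K p q ≡ edgeMultiplicity n L K p q [MOD 2] := by
  simp only [monB, edgeMultiplicity, Matrix.of_apply]
  split_ifs
  · exact Nat.mod_modEq _ _
  · rfl

variable {n} in
lemma edgeMultiplicity_eq_zero_of_le {p q : Fin n} (h : q ≤ p) : edgeMultiplicity n L K p q = 0 :=
  if_neg h.not_gt

lemma junctionIn_mul_junctionOut (i : ℕ) :
    junctionIn n L K i * junctionOut n L = rowPart (edgeMultiplicity n L K) i := by
  ext a b
  simp only [Matrix.mul_apply, Fintype.sum_prod_type, junctionIn, junctionOut, rowPart,
    edgeMultiplicity, Matrix.of_apply]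
  split_ifs with ha hab
  · have hb : (b : ℕ) = b - 1 + 1 := by omega
    have hj : i ≤ b - 1 ∧ (b : ℕ) - 1 ≤ n - 2 := by omega
    rw [Finset.sum_range, Fintype.sum_eq_single (⟨b - 1, by omega⟩ : Fin n)]
    · simp [← hb, ha, hj]
    · intro j hne
      have hbj : (b : ℕ) ≠ j + 1 := fun h => hne (Fin.ext (by simp [h]))
      simp [hbj]
  · refine Finset.sum_eq_zero fun j _ => Finset.sum_eq_zero fun ℓ _ => ?_
    by_cases hbj : (b : ℕ) = j + 1
    · have haj : ¬(a : ℕ) ≤ j := by omega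
      simp [haj]
    · simp [hbj]
  · simp [ha]

lemma isLayered_layerAdj : IsLayered (layerAdj n L K) := by
  intro p q h
  by_contra hpq
  exact h (if_neg hpq)

variable {n} {s t : Fin (2 * n - 1)}

lemma layerBlock_layerAdj_of_even {i : ℕ} (hs : (s : ℕ) = 2 * i) (ht : (t : ℕ) = s + 1) :
    layerBlock (layerAdj n L K) s t = Matrix.fromBlocks 1 (junctionIn n L K i) 0 0 := by
  ext (a | v) (b | w) <;>
    simp [layerBlock, layerAdj, junctionIn, Matrix.one_apply, hs, ht]

lemma layerBlock_layerAdj_of_odd (hs : (s : ℕ) % 2 = 1) (ht : (t : ℕ) = s + 1) :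
    layerBlock (layerAdj n L K) s t = Matrix.fromBlocks 1 0 (junctionOut n L) 0 := by
  ext (a | v) (b | w) <;>
    simp [layerBlock, layerAdj, junctionOut, Matrix.one_apply, hs, ht]

lemma layerBlock_layerAdj_sq {i : ℕ} (hs : (s : ℕ) = 2 * i) (ht : (t : ℕ) = s + 2) :
    layerBlock (layerAdj n L K ^ 2) s t =
      Matrix.fromBlocks (1 + rowPart (edgeMultiplicity n L K) i) 0 0 0 := by
  let r : Fin (2 * n - 1) := ⟨s + 1, by omega⟩
  rw [(isLayered_layerAdj n L K).layerBlock_pow_add (j := 1) 1 (t := r) t rfl, pow_one,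
    layerBlock_layerAdj_of_even L K hs rfl,
    layerBlock_layerAdj_of_odd L K (s := r) (by simp [r, hs]) (by simp [r, ht]),
    Matrix.fromBlocks_multiply, ← junctionIn_mul_junctionOut]
  simp

theorem toBlocks₁₁_layerBlock_layerAdj_pow {m : ℕ} (hs : (s : ℕ) = 0) (ht : (t : ℕ) = 2 * m) :
    (layerBlock (layerAdj n L K ^ (2 * m)) s t).toBlocks₁₁ =
      ((List.range m).map fun i => 1 + rowPart (edgeMultiplicity n L K) i).prod := by
  induction m generalizing t with
  | zero =>
    obtain rfl : s = t := Fin.ext (by omega)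
    ext a b
    simp [layerBlock, Matrix.toBlocks₁₁, Matrix.one_apply]
  | succ m ih =>
    let r : Fin (2 * n - 1) := ⟨2 * m, by omega⟩
    rw [mul_add, mul_one,
      (isLayered_layerAdj n L K).layerBlock_pow_add 2 (t := r) t (by simp [r, hs]),
      layerBlock_layerAdj_sq L K (s := r) rfl ht, List.prod_range_succ, ← ih (t := r) rfl]
    nth_rw 1 [← Matrix.fromBlocks_toBlocks (layerBlock (layerAdj n L K ^ (2 * m)) s r)]
    rw [Matrix.fromBlocks_multiply, Matrix.toBlocks_fromBlocks₁₁, Matrix.mul_zero, add_zero]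

theorem layerAdj_pow_apply_eq_sum_edgeMultiplicity_pow {a b : Fin n} (hab : a ≠ b)
    (hs : (s : ℕ) = 0) (ht : (t : ℕ) = 2 * (n - 1)) :
    (layerAdj n L K ^ (2 * (n - 1))) (s, Sum.inl a) (t, Sum.inl b) =
      ∑ k ∈ Finset.Icc 1 (n - 1), (edgeMultiplicity n L K ^ k) a b := by
  have blocks := toBlocks₁₁_layerBlock_layerAdj_pow L K hs ht
  rw [prod_one_add_rowPart fun _ _ => edgeMultiplicity_eq_zero_of_le L K] at blocks
  calc (layerAdj n L K ^ (2 * (n - 1))) (s, Sum.inl a) (t, Sum.inl b)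
    _ = (∑ k ∈ Finset.range (n - 1 + 1), edgeMultiplicity n L K ^ k) a b := congrFun₂ blocks a b
    _ = ∑ k ∈ Finset.Icc 1 (n - 1), (edgeMultiplicity n L K ^ k) a b := by
      rw [Matrix.sum_apply, Finset.range_eq_Ico, Finset.sum_eq_sum_Ico_succ_bot (by omega),
        pow_zero, Matrix.one_apply_ne hab, zero_add]
      rfl

end LayerAdj

/-- Proposition 4.12 ('prop:C'): the number of directed paths in the layered graph `C`
from vertex `1` in layer `N_1` to vertex `n` in layer `N_n` is congruent modulo 2 to the
number of directed paths from vertex `1` to vertex `n` in the monotone DAG `B`. -/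
theorem stmt8 (n L : ℕ) (hn : 2 ≤ n) (hL : 1 ≤ L) (K : ℕ → ℕ → ℕ → Bool) :
    (∑ k ∈ Finset.Icc 1 (2 * n - 2),
        ((layerAdj n L K) ^ k)
          ((⟨0, by omega⟩ : Fin (2 * n - 1)), Sum.inl (⟨0, by omega⟩ : Fin n))
          ((⟨2 * n - 2, by omega⟩ : Fin (2 * n - 1)),
            Sum.inl (⟨n - 1, by omega⟩ : Fin n))) ≡
      (∑ k ∈ Finset.Icc 1 (n - 1),
        ((monB n L K) ^ k) (⟨0, by omega⟩ : Fin n) (⟨n - 1, by omega⟩ : Fin n))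
      [MOD 2] := by
  have length_eq : 2 * n - 2 = 2 * (n - 1) := by omega
  rw [(isLayered_layerAdj n L K).sum_pow_apply (d := 2 * (n - 1))
      (Finset.mem_Icc.2 (by omega)) (by simp [length_eq]),
    layerAdj_pow_apply_eq_sum_edgeMultiplicity_pow L K (Fin.ne_of_val_ne (by simp; omega)) rfl
      length_eq]
  exact Nat.ModEq.sum fun k _ =>
    (pow_apply_modEq (monB_modEq_edgeMultiplicity n L K) k _ _).symm
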